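/- arXiv:1906.09737 — 4 statements merged into one kernel-verified Lean document; each statement's English description precedes it below -/
import Mathlib

section
/- Let ρ_1,…,ρ_n be density matrices on ℂ^d with prior probabilities q_1,…,q_n > 0 summing to 1, fix an index m ∈ {1,…,n}, and let D ≥ 1 be an integer. Then the following are equivalent: (i) for every k ∈ {1,…,n}, the matrix q_m^{1/D} ρ_m − q_k^{1/D} ρ_k is positive semidefinite; (ii) for every k ∈ {1,…,n} and every tuple of matrices A_1,…,A_D on ℂ^d with 0 ≤ A_j ≤ I (each A_j positive semidefinite and I − A_j positive semidefinite), one has q_m ∏_{j=1}^D tr(ρ_m A_j) ≥ q_k ∏_{j=1}^D tr(ρ_k A_j). -/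
open Matrix
open scoped ComplexOrder

/-- The probability `tr(A ρ)` (real part of the trace). -/
noncomputable def tprob {d : ℕ} (ρ A : Matrix (Fin d) (Fin d) ℂ) : ℝ :=
  ((A * ρ).trace).re

/-!
Write `q = (q ^ (1 / D)) ^ D` and distribute the factors over the `D` copies: condition (ii)
compares the products of the numbers `q_k ^ (1 / D) * tr (ρ_k A_j)` over `j`. As the `A_j` are
chosen independently and may all be equal, such products compare for all tuples of effects exactly
when their factors compare for a single effect. That in turn is condition (i), because a Hermitian
matrix is positive semidefinite as soon as its trace against every effect is nonnegative: testing
against the projections onto its eigenvectors recovers its eigenvalues.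
-/

theorem forall_le_iff_forall_prod_le {ι α R : Type*} [Fintype ι] [Nonempty ι] [CommSemiring R]
    [LinearOrder R] [IsStrictOrderedRing R] {s : Set α} {f g : α → R}
    (hf : ∀ a ∈ s, 0 ≤ f a) (hg : ∀ a ∈ s, 0 ≤ g a) :
    (∀ a ∈ s, f a ≤ g a) ↔ ∀ x : ι → α, (∀ j, x j ∈ s) → ∏ j, f (x j) ≤ ∏ j, g (x j) := by
  constructor
  · intro hfg x hx
    exact Finset.prod_le_prod (fun j _ => hf _ (hx j)) fun j _ => hfg _ (hx j)
  · intro hprod a ha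
    have hpow : f a ^ Fintype.card ι ≤ g a ^ Fintype.card ι := by
      simpa only [Finset.prod_const, Finset.card_univ] using hprod (fun _ => a) fun _ => ha
    exact le_of_pow_le_pow_left₀ Fintype.card_ne_zero (hg a ha) hpow

theorem mul_prod_eq_prod_rpow_mul {D : ℕ} (hD : D ≠ 0) {q : ℝ} (hq : 0 ≤ q) (x : Fin D → ℝ) :
    q * ∏ j, x j = ∏ j, q ^ ((1 : ℝ) / D) * x j := by
  rw [Finset.prod_mul_distrib, Finset.prod_const, Finset.card_univ, Fintype.card_fin, one_div,
    Real.rpow_inv_natCast_pow hq hD]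

section RankOne

variable {n : Type*} [Fintype n]

theorem trace_vecMulVec_mul {R : Type*} [CommSemiring R] (v w : n → R) (M : Matrix n n R) :
    (vecMulVec v w * M).trace = w ⬝ᵥ M *ᵥ v := by
  rw [vecMulVec_mul, trace_vecMulVec, dotProduct_comm, dotProduct_mulVec]

theorem isStarProjection_vecMulVec_star {R : Type*} [CommSemiring R] [StarRing R] {v : n → R}
    (hv : star v ⬝ᵥ v = 1) : IsStarProjection (vecMulVec v (star v)) where
  isIdempotentElem := by
    rw [IsIdempotentElem, vecMulVec_mul_vecMulVec, hv, one_smul]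
  isSelfAdjoint := by
    rw [IsSelfAdjoint, star_eq_conjTranspose, conjTranspose_vecMulVec, star_star]

end RankOne

section Effects

variable {𝕜 n : Type*} [RCLike 𝕜] [Fintype n]

theorem trace_mul_nonneg_of_posSemidef {A M : Matrix n n 𝕜}
    (hA : A.PosSemidef) (hM : M.PosSemidef) : 0 ≤ (A * M).trace := by
  obtain ⟨r, v, rfl⟩ := posSemidef_iff_eq_sum_vecMulVec.mp hA
  rw [Finset.sum_mul, trace_sum]
  refine Finset.sum_nonneg fun i _ => ?_
  rw [trace_vecMulVec_mul]
  exact hM.dotProduct_mulVec_nonneg (v i)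

variable [DecidableEq n]

/-- An effect `0 ≤ A ≤ 1`, that is, the operator attached to one outcome of a quantum measurement.
The two inequalities in the Loewner order are spelled out as positive semidefiniteness. -/
def IsEffect (A : Matrix n n 𝕜) : Prop :=
  A.PosSemidef ∧ (1 - A).PosSemidef

theorem IsEffect.re_trace_mul_nonneg {A M : Matrix n n 𝕜} (hA : IsEffect A)
    (hM : M.PosSemidef) : 0 ≤ RCLike.re (A * M).trace :=
  (RCLike.nonneg_iff.mp (trace_mul_nonneg_of_posSemidef hA.1 hM)).1

open scoped MatrixOrder in
theorem isEffect_of_isStarProjection {P : Matrix n n 𝕜} (hP : IsStarProjection P) :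
    IsEffect P :=
  ⟨nonneg_iff_posSemidef.mp hP.nonneg, nonneg_iff_posSemidef.mp hP.one_sub_nonneg⟩

theorem exists_isEffect_re_trace_mul_eq_eigenvalues {M : Matrix n n 𝕜} (hM : M.IsHermitian)
    (i : n) : ∃ A : Matrix n n 𝕜, IsEffect A ∧ RCLike.re (A * M).trace = hM.eigenvalues i := by
  let v : n → 𝕜 := hM.eigenvectorBasis i
  have hv : star v ⬝ᵥ v = 1 := by
    rw [dotProduct_comm, ← EuclideanSpace.inner_eq_star_dotProduct, inner_self_eq_norm_sq_to_K,
      hM.eigenvectorBasis.norm_eq_one, RCLike.ofReal_one, one_pow]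
  have hP : IsEffect (vecMulVec v (star v)) :=
    isEffect_of_isStarProjection (isStarProjection_vecMulVec_star hv)
  refine ⟨vecMulVec v (star v), hP, ?_⟩
  rw [trace_vecMulVec_mul, hM.eigenvalues_eq]

theorem posSemidef_iff_forall_isEffect_re_trace_mul_nonneg {M : Matrix n n 𝕜}
    (hM : M.IsHermitian) :
    M.PosSemidef ↔ ∀ A : Matrix n n 𝕜, IsEffect A → 0 ≤ RCLike.re (A * M).trace := by
  refine ⟨fun hpos A hA => hA.re_trace_mul_nonneg hpos, fun htrace => ?_⟩
  refine hM.posSemidef_iff_eigenvalues_nonneg.mpr fun i => ?_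
  obtain ⟨A, hA, hAi⟩ := exists_isEffect_re_trace_mul_eq_eigenvalues hM i
  exact hAi ▸ htrace A hA

theorem posSemidef_smul_sub_smul_iff_forall_isEffect {ρ σ : Matrix n n 𝕜}
    (hρ : ρ.IsHermitian) (hσ : σ.IsHermitian) (a b : ℝ) :
    (a • ρ - b • σ).PosSemidef ↔ ∀ A : Matrix n n 𝕜, IsEffect A →
      b * RCLike.re (A * σ).trace ≤ a * RCLike.re (A * ρ).trace := by
  have hsub : (a • ρ - b • σ).IsHermitian :=
    (hρ.smul (IsSelfAdjoint.all a)).sub (hσ.smul (IsSelfAdjoint.all b))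
  rw [posSemidef_iff_forall_isEffect_re_trace_mul_nonneg hsub]
  simp only [mul_sub, mul_smul_comm, trace_sub, trace_smul, map_sub, RCLike.smul_re, sub_nonneg]

theorem posSemidef_rpow_smul_sub_iff_forall_prod_le {ρ σ : Matrix n n 𝕜}
    (hρ : ρ.PosSemidef) (hσ : σ.PosSemidef) {p q : ℝ} (hp : 0 ≤ p) (hq : 0 ≤ q)
    {D : ℕ} (hD : D ≠ 0) :
    (p ^ ((1 : ℝ) / D) • ρ - q ^ ((1 : ℝ) / D) • σ).PosSemidef ↔
      ∀ A : Fin D → Matrix n n 𝕜, (∀ j, IsEffect (A j)) →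
        q * ∏ j, RCLike.re (A j * σ).trace ≤ p * ∏ j, RCLike.re (A j * ρ).trace := by
  have : NeZero D := ⟨hD⟩
  simp only [mul_prod_eq_prod_rpow_mul hD hp, mul_prod_eq_prod_rpow_mul hD hq]
  rw [posSemidef_smul_sub_smul_iff_forall_isEffect hρ.isHermitian hσ.isHermitian]
  exact forall_le_iff_forall_prod_le (s := {A | IsEffect A})
    (fun _ hA => mul_nonneg (Real.rpow_nonneg hq _) (hA.re_trace_mul_nonneg hσ))
    (fun _ hA => mul_nonneg (Real.rpow_nonneg hp _) (hA.re_trace_mul_nonneg hρ))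

theorem repeated_messages_always_choose_m_iff_general {ι : Type*} {ρ : ι → Matrix n n 𝕜}
    (hρ : ∀ ν, (ρ ν).PosSemidef) {q : ι → ℝ} (hq : ∀ ν, 0 ≤ q ν) (m : ι) {D : ℕ} (hD : D ≠ 0) :
    (∀ k, (q m ^ ((1 : ℝ) / D) • ρ m - q k ^ ((1 : ℝ) / D) • ρ k).PosSemidef) ↔
      ∀ (k : ι) (A : Fin D → Matrix n n 𝕜), (∀ j, IsEffect (A j)) →
        q k * ∏ j, RCLike.re (A j * ρ k).trace ≤ q m * ∏ j, RCLike.re (A j * ρ m).trace :=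
  forall_congr' fun k =>
    posSemidef_rpow_smul_sub_iff_forall_prod_le (hρ m) (hρ k) (hq m) (hq k) hD

end Effects

/-- Condition (i): `q_m^{1/D} ρ_m − q_k^{1/D} ρ_k ≥ 0` for all `k`, is equivalent to
condition (ii): for every `k` and every tuple of `D` measurement effects `0 ≤ A_j ≤ I`,
`q_m ∏_j tr(ρ_m A_j) ≥ q_k ∏_j tr(ρ_k A_j)`. -/
theorem repeated_messages_always_choose_m_iff {d n : ℕ}
    (ρ : Fin n → Matrix (Fin d) (Fin d) ℂ)
    (hρ : ∀ ν, (ρ ν).PosSemidef ∧ (ρ ν).trace = 1)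
    (q : Fin n → ℝ) (hq : ∀ ν, 0 < q ν) (hqs : ∑ ν, q ν = 1)
    (m : Fin n) (D : ℕ) (hD : 1 ≤ D) :
    (∀ k : Fin n,
        ((((q m) ^ ((1 : ℝ) / D) : ℝ) : ℂ) • ρ m
          - (((q k) ^ ((1 : ℝ) / D) : ℝ) : ℂ) • ρ k).PosSemidef)
    ↔ (∀ (k : Fin n) (A : Fin D → Matrix (Fin d) (Fin d) ℂ),
        (∀ j, (A j).PosSemidef ∧ (1 - A j).PosSemidef) →
        q k * ∏ j, tprob (ρ k) (A j) ≤ q m * ∏ j, tprob (ρ m) (A j)) := by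
  exact repeated_messages_always_choose_m_iff_general (fun ν => (hρ ν).1) (fun ν => (hq ν).le) m
    (Nat.one_le_iff_ne_zero.mp hD)
end

section
/- Let ρ_1,…,ρ_n be density matrices on ℂ^d with priors q_1,…,q_n > 0 summing to 1, write ρ̄ = Σ_ν q_ν ρ_ν, and fix ν ∈ {1,…,n}. Let A_i and A_j be positive semidefinite matrices with tr(ρ̄ A_i) > 0, tr(ρ̄ A_j) > 0, tr(ρ_ν A_i) > 0, tr(ρ_ν A_j) > 0. Writing c_ν(A) = q_ν tr(ρ_ν A)/tr(ρ̄ A), one has log c_ν(A_i + A_j) ≤ [ tr(ρ_ν A_i) log c_ν(A_i) + tr(ρ_ν A_j) log c_ν(A_j) ] / tr(ρ_ν (A_i + A_j)), with equality when A_i and A_j are proportional. (Hence the logarithmic utility U = log of the posterior probability satisfies the merging condition C3.) -/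
open Matrix
open scoped ComplexOrder

/-- The confidence of `A` in message `ν`: `q_ν tr(ρ_ν A) / tr(ρ̄ A)`. -/
noncomputable def conf {d n : ℕ} (q : Fin n → ℝ) (ρ : Fin n → Matrix (Fin d) (Fin d) ℂ)
    (ν : Fin n) (A : Matrix (Fin d) (Fin d) ℂ) : ℝ :=
  q ν * tprob (ρ ν) A / tprob (∑ μ, ((q μ : ℂ) • ρ μ)) A

/-!
The confidence of a merged effect is the harmonic mean of the two confidences with weights
`tr(ρ_ν A_i)` and `tr(ρ_ν A_j)`, because `tr(ρ_ν A) / c_ν(A) = tr(ρ̄ A) / q_ν` is additive in `A`.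
The inequality is therefore concavity of `log` applied to the inverse confidences. Moreover `c_ν`
is invariant under rescaling, so for proportional effects all three confidences coincide.
-/

theorem isSelfAdjoint_trace_mul {m R : Type*} [Fintype m] [CommSemiring R] [StarRing R]
    {A B : Matrix m m R} (hA : A.IsHermitian) (hB : B.IsHermitian) :
    IsSelfAdjoint (A * B).trace := by
  rw [IsSelfAdjoint, ← trace_conjTranspose, conjTranspose_mul, hA.eq, hB.eq, trace_mul_comm]

section Probability

variable {d : ℕ} {ρ A : Matrix (Fin d) (Fin d) ℂ}

theorem tprob_add (ρ A B : Matrix (Fin d) (Fin d) ℂ) :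
    tprob ρ (A + B) = tprob ρ A + tprob ρ B := by
  simp [tprob, add_mul]

theorem tprob_smul (ρ : Matrix (Fin d) (Fin d) ℂ) (r : ℝ) (A : Matrix (Fin d) (Fin d) ℂ) :
    tprob ρ (r • A) = r * tprob ρ A := by
  simp [tprob]

theorem ofReal_tprob (hρ : ρ.IsHermitian) (hA : A.IsHermitian) :
    (tprob ρ A : ℂ) = (A * ρ).trace :=
  Complex.conj_eq_iff_re.mp (isSelfAdjoint_trace_mul hA hρ)

theorem eq_ofReal_tprob_div_tprob {c : ℂ} (hρ : ρ.IsHermitian) (hA : A.IsHermitian)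
    (hcA : (c • A).IsHermitian) (hρA : tprob ρ A ≠ 0) :
    c = (tprob ρ (c • A) / tprob ρ A : ℝ) := by
  have hρA' : (tprob ρ A : ℂ) ≠ 0 := Complex.ofReal_ne_zero.mpr hρA
  rw [Complex.ofReal_div, eq_div_iff hρA', ofReal_tprob hρ hA, ofReal_tprob hρ hcA, smul_mul,
    trace_smul, smul_eq_mul]

end Probability

section Confidence

variable {d n : ℕ} {q : Fin n → ℝ} {ρ : Fin n → Matrix (Fin d) (Fin d) ℂ} {ν : Fin n}
  {A B : Matrix (Fin d) (Fin d) ℂ}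

theorem conf_pos (hq : 0 < q ν) (hνA : 0 < tprob (ρ ν) A)
    (hA : 0 < tprob (∑ μ, ((q μ : ℂ) • ρ μ)) A) : 0 < conf q ρ ν A :=
  div_pos (mul_pos hq hνA) hA

theorem conf_smul {r : ℝ} (hr : r ≠ 0) (A : Matrix (Fin d) (Fin d) ℂ) :
    conf q ρ ν (r • A) = conf q ρ ν A := by
  rw [conf, tprob_smul, tprob_smul, mul_left_comm, mul_div_mul_left _ _ hr, ← conf]

theorem inv_conf_add (hνA : tprob (ρ ν) A ≠ 0) (hνB : tprob (ρ ν) B ≠ 0) :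
    (conf q ρ ν (A + B))⁻¹ =
      tprob (ρ ν) A / tprob (ρ ν) (A + B) * (conf q ρ ν A)⁻¹ +
        tprob (ρ ν) B / tprob (ρ ν) (A + B) * (conf q ρ ν B)⁻¹ := by
  simp only [conf, inv_div, tprob_add]
  field_simp

theorem log_conf_add_le (hq : 0 < q ν)
    (hA : 0 < tprob (∑ μ, ((q μ : ℂ) • ρ μ)) A) (hB : 0 < tprob (∑ μ, ((q μ : ℂ) • ρ μ)) B)
    (hνA : 0 < tprob (ρ ν) A) (hνB : 0 < tprob (ρ ν) B) :
    Real.log (conf q ρ ν (A + B)) ≤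
      (tprob (ρ ν) A * Real.log (conf q ρ ν A) + tprob (ρ ν) B * Real.log (conf q ρ ν B)) /
        tprob (ρ ν) (A + B) := by
  have hνAB : 0 < tprob (ρ ν) (A + B) := tprob_add (ρ ν) A B ▸ add_pos hνA hνB
  have weights_sum : tprob (ρ ν) A / tprob (ρ ν) (A + B) +
      tprob (ρ ν) B / tprob (ρ ν) (A + B) = 1 := by
    rw [← add_div, ← tprob_add, div_self hνAB.ne']
  have jensen := strictConcaveOn_log_Ioi.concaveOn.2
    (inv_pos.mpr (conf_pos hq hνA hA)) (inv_pos.mpr (conf_pos hq hνB hB))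
    (div_pos hνA hνAB).le (div_pos hνB hνAB).le weights_sum
  simp only [smul_eq_mul, ← inv_conf_add hνA.ne' hνB.ne', Real.log_inv] at jensen
  rw [add_div, mul_div_right_comm, mul_div_right_comm]
  linarith

theorem log_conf_add_smul {r : ℝ} (hr : 0 < r) (hνA : tprob (ρ ν) A ≠ 0) :
    Real.log (conf q ρ ν (A + r • A)) =
      (tprob (ρ ν) A * Real.log (conf q ρ ν A) +
          tprob (ρ ν) (r • A) * Real.log (conf q ρ ν (r • A))) /
        tprob (ρ ν) (A + r • A) := by
  have merged : A + r • A = (1 + r) • A := by rw [add_smul, one_smul]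
  have hr' : 1 + r ≠ 0 := by positivity
  have hνAB : tprob (ρ ν) (A + r • A) ≠ 0 := by
    rw [merged, tprob_smul]
    exact mul_ne_zero hr' hνA
  rw [conf_smul hr.ne', ← add_mul, ← tprob_add, mul_div_cancel_left₀ _ hνAB, merged,
    conf_smul hr']

end Confidence

theorem log_confidence_merging_general {d n : ℕ}
    {ρ : Fin n → Matrix (Fin d) (Fin d) ℂ} {q : Fin n → ℝ} {ν : Fin n}
    (hρ : (ρ ν).IsHermitian) (hq : 0 < q ν)
    {Ai Aj : Matrix (Fin d) (Fin d) ℂ} (hAi : Ai.IsHermitian) (hAj : Aj.IsHermitian)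
    (hbi : 0 < tprob (∑ μ, ((q μ : ℂ) • ρ μ)) Ai)
    (hbj : 0 < tprob (∑ μ, ((q μ : ℂ) • ρ μ)) Aj)
    (hνi : 0 < tprob (ρ ν) Ai) (hνj : 0 < tprob (ρ ν) Aj) :
    Real.log (conf q ρ ν (Ai + Aj))
      ≤ (tprob (ρ ν) Ai * Real.log (conf q ρ ν Ai)
          + tprob (ρ ν) Aj * Real.log (conf q ρ ν Aj))
        / tprob (ρ ν) (Ai + Aj)
    ∧ ((∃ c : ℂ, Aj = c • Ai) →
        Real.log (conf q ρ ν (Ai + Aj))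
          = (tprob (ρ ν) Ai * Real.log (conf q ρ ν Ai)
              + tprob (ρ ν) Aj * Real.log (conf q ρ ν Aj))
            / tprob (ρ ν) (Ai + Aj)) := by
  refine ⟨log_conf_add_le hq hbi hbj hνi hνj, ?_⟩
  rintro ⟨c, rfl⟩
  have c_real := eq_ofReal_tprob_div_tprob hρ hAi hAj hνi.ne'
  have ratio_pos := div_pos hνj hνi
  generalize tprob (ρ ν) (c • Ai) / tprob (ρ ν) Ai = r at c_real ratio_pos
  rw [c_real, Complex.coe_smul]
  exact log_conf_add_smul ratio_pos hνi.ne'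

/-- The logarithmic utility `log` of the posterior probability satisfies the merging
condition C3:
`log c_ν(A_i + A_j) ≤ [tr(ρ_ν A_i) log c_ν(A_i) + tr(ρ_ν A_j) log c_ν(A_j)] / tr(ρ_ν (A_i + A_j))`,
with equality when `A_i` and `A_j` are proportional. -/
theorem log_confidence_merging {d n : ℕ}
    (ρ : Fin n → Matrix (Fin d) (Fin d) ℂ)
    (hρ : ∀ ν, (ρ ν).PosSemidef ∧ (ρ ν).trace = 1)
    (q : Fin n → ℝ) (hq : ∀ ν, 0 < q ν) (hqs : ∑ ν, q ν = 1)
    (ν : Fin n)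
    (Ai Aj : Matrix (Fin d) (Fin d) ℂ)
    (hAi : Ai.PosSemidef) (hAj : Aj.PosSemidef)
    (hbi : 0 < tprob (∑ μ, ((q μ : ℂ) • ρ μ)) Ai)
    (hbj : 0 < tprob (∑ μ, ((q μ : ℂ) • ρ μ)) Aj)
    (hνi : 0 < tprob (ρ ν) Ai) (hνj : 0 < tprob (ρ ν) Aj) :
    Real.log (conf q ρ ν (Ai + Aj))
      ≤ (tprob (ρ ν) Ai * Real.log (conf q ρ ν Ai)
          + tprob (ρ ν) Aj * Real.log (conf q ρ ν Aj))
        / tprob (ρ ν) (Ai + Aj)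
    ∧ ((∃ c : ℂ, Aj = c • Ai) →
        Real.log (conf q ρ ν (Ai + Aj))
          = (tprob (ρ ν) Ai * Real.log (conf q ρ ν Ai)
              + tprob (ρ ν) Aj * Real.log (conf q ρ ν Aj))
            / tprob (ρ ν) (Ai + Aj)) :=
  log_confidence_merging_general (hρ ν).1.isHermitian (hq ν) hAi.isHermitian hAj.isHermitian
    hbi hbj hνi hνj
end

section
/- Let f be any real-valued function on POVMs on ℂ^d that is monotone under post-processing, i.e., f(β) ≤ f(α) whenever β is a post-processing of α. Then for every POVM α on ℂ^d there exists a POVM α′ on ℂ^d all of whose elements have rank at most 1 such that f(α′) ≥ f(α). In particular, the supremum of f over all POVMs equals its supremum over POVMs with only rank-≤1 elements. -/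
open Matrix
open scoped ComplexOrder

/-- A POVM: a finite tuple of positive semidefinite matrices summing to the identity. -/
def IsPOVM {d m : ℕ} (A : Fin m → Matrix (Fin d) (Fin d) ℂ) : Prop :=
  (∀ y, (A y).PosSemidef) ∧ ∑ y, A y = 1

/-!
Write each element of a POVM as a sum of positive semidefinite matrices `v v*` of rank at most one.
All these summands together form a POVM, and merging those that come from the same element gives
back the original POVM. Merging outcomes is a deterministic post-processing, so it cannot increase
a monotone.
-/

section CoarseGrain

variable {ι κ M : Type*} [Fintype ι] [DecidableEq κ] [AddCommMonoid M]

/-- The coarse-graining of a family `A` along a relabelling `g` of its outcomes: all outcomes with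
the same label are merged by summing their elements, and labels outside the range of `g` get `0`. -/
def coarseGrain (g : ι → κ) (A : ι → M) (k : κ) : M :=
  ∑ i with g i = k, A i

theorem sum_coarseGrain [Fintype κ] (g : ι → κ) (A : ι → M) :
    ∑ k, coarseGrain g A k = ∑ i, A i :=
  Finset.sum_fiberwise _ g A

theorem coarseGrain_comp_equiv {ι' : Type*} [Fintype ι'] (e : ι' ≃ ι) (g : ι → κ) (A : ι → M) :
    coarseGrain (g ∘ e) (A ∘ e) = coarseGrain g A := by
  funext k
  simp only [coarseGrain, Finset.sum_filter, Function.comp_apply]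
  exact e.sum_comp fun i => if g i = k then A i else 0

theorem coarseGrain_sigma_fst [Fintype κ] {n : κ → Type*} [∀ k, Fintype (n k)]
    (A : (Σ k, n k) → M) : coarseGrain Sigma.fst A = fun k => ∑ i, A ⟨k, i⟩ := by
  funext k
  rw [coarseGrain, Finset.sum_filter, Fintype.sum_sigma, Fintype.sum_eq_single k]
  · simp
  · intro l hl
    simp [hl]

end CoarseGrain

/-- `B` is a post-processing of `A`: outcome `j` of `A` is reported as outcome `i` with
probability `p i j`. The probabilities are real and act on `M` through the coercion to `ℂ`. -/
def IsPostProcessing {ι κ M : Type*} [Fintype ι] [Fintype κ] [AddCommMonoid M] [Module ℂ M]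
    (B : κ → M) (A : ι → M) : Prop :=
  ∃ p : κ → ι → ℝ, (∀ i j, 0 ≤ p i j) ∧ (∀ j, ∑ i, p i j = 1) ∧
    ∀ i, B i = ∑ j, (p i j : ℂ) • A j

theorem isPostProcessing_coarseGrain {ι κ M : Type*} [Fintype ι] [Fintype κ] [DecidableEq κ]
    [AddCommMonoid M] [Module ℂ M] (g : ι → κ) (A : ι → M) :
    IsPostProcessing (coarseGrain g A) A := by
  refine ⟨fun i j => if g j = i then 1 else 0, fun i j => ?_, fun j => ?_, fun i => ?_⟩
  · positivity
  · simp
  · simp [coarseGrain, Finset.sum_filter, ite_smul, apply_ite]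

namespace IsPOVM

variable {d m : ℕ} {A : Fin m → Matrix (Fin d) (Fin d) ℂ}

protected theorem coarseGrain {m' : ℕ} (hA : IsPOVM A) (g : Fin m → Fin m') :
    IsPOVM (coarseGrain g A) :=
  ⟨fun _ => posSemidef_sum _ fun i _ => hA.1 i, (sum_coarseGrain g A).trans hA.2⟩

theorem exists_rank_le_one_coarseGrain_eq (hA : IsPOVM A) :
    ∃ (n : ℕ) (B : Fin n → Matrix (Fin d) (Fin d) ℂ) (g : Fin n → Fin m),
      IsPOVM B ∧ (∀ k, (B k).rank ≤ 1) ∧ coarseGrain g B = A := by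
  choose c v hv using fun y => posSemidef_iff_eq_sum_vecMulVec.1 (hA.1 y)
  let V : (Σ y, Fin (c y)) → Matrix (Fin d) (Fin d) ℂ :=
    fun x => vecMulVec (v x.1 x.2) (star (v x.1 x.2))
  let e : Fin (∑ y, c y) ≃ Σ y, Fin (c y) := finSigmaFinEquiv.symm
  have merge_eq : coarseGrain (Sigma.fst ∘ e) (V ∘ e) = A := by
    rw [coarseGrain_comp_equiv, coarseGrain_sigma_fst]
    exact funext fun y => (hv y).symm
  have sum_eq_one : ∑ k, (V ∘ e) k = 1 := by
    rw [← sum_coarseGrain (Sigma.fst ∘ e), merge_eq, hA.2]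
  exact ⟨_, V ∘ e, Sigma.fst ∘ e, ⟨fun _ => posSemidef_vecMulVec_self_star _, sum_eq_one⟩,
    fun _ => rank_vecMulVec_le _ _, merge_eq⟩

theorem exists_rank_le_one_le {R : Type*} [LE R] (hA : IsPOVM A)
    (f : ∀ m : ℕ, (Fin m → Matrix (Fin d) (Fin d) ℂ) → R)
    (hmono : ∀ (m m' : ℕ) (A : Fin m → Matrix (Fin d) (Fin d) ℂ) (g : Fin m → Fin m'),
      IsPOVM A → f m' (coarseGrain g A) ≤ f m A) :
    ∃ (m' : ℕ) (A' : Fin m' → Matrix (Fin d) (Fin d) ℂ),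
      IsPOVM A' ∧ (∀ k, (A' k).rank ≤ 1) ∧ f m A ≤ f m' A' := by
  obtain ⟨n, B, g, hB, hrank, rfl⟩ := hA.exists_rank_le_one_coarseGrain_eq
  exact ⟨n, B, hB, hrank, hmono n m B g hB⟩

end IsPOVM

theorem monotone_attains_on_rank_one_general {d : ℕ} {R : Type*}
    [ConditionallyCompleteLinearOrder R]
    (f : ∀ m : ℕ, (Fin m → Matrix (Fin d) (Fin d) ℂ) → R)
    (hmono : ∀ (m m' : ℕ) (A : Fin m → Matrix (Fin d) (Fin d) ℂ) (g : Fin m → Fin m'),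
      IsPOVM A → f m' (coarseGrain g A) ≤ f m A) :
    (∀ (m : ℕ) (A : Fin m → Matrix (Fin d) (Fin d) ℂ), IsPOVM A →
      ∃ (m' : ℕ) (A' : Fin m' → Matrix (Fin d) (Fin d) ℂ),
        IsPOVM A' ∧ (∀ k, (A' k).rank ≤ 1) ∧ f m A ≤ f m' A')
    ∧ sSup {x : R | ∃ (m : ℕ) (A : Fin m → Matrix (Fin d) (Fin d) ℂ),
          IsPOVM A ∧ f m A = x}
        = sSup {x : R | ∃ (m : ℕ) (A : Fin m → Matrix (Fin d) (Fin d) ℂ),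
          IsPOVM A ∧ (∀ k, (A k).rank ≤ 1) ∧ f m A = x} := by
  refine ⟨fun m A hA => hA.exists_rank_le_one_le f hmono,
    csSup_eq_csSup_of_forall_exists_le ?_ ?_⟩
  · rintro _ ⟨m, A, hA, rfl⟩
    obtain ⟨m', A', hA', hrank, hle⟩ := hA.exists_rank_le_one_le f hmono
    exact ⟨_, ⟨m', A', hA', hrank, rfl⟩, hle⟩
  · rintro x ⟨m, A, hA, -, hx⟩
    exact ⟨x, ⟨m, A, hA, hx⟩, le_rfl⟩

/-- If `f` is a real-valued function on POVMs that is monotone under post-processing,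
then every POVM is dominated (in `f`-value) by some POVM with only rank-≤1 elements;
in particular the supremum of `f` over all POVMs equals its supremum over POVMs with
only rank-≤1 elements. -/
theorem monotone_attains_on_rank_one {d : ℕ}
    (f : ∀ m : ℕ, (Fin m → Matrix (Fin d) (Fin d) ℂ) → ℝ)
    (hmono : ∀ (m m' : ℕ) (A : Fin m → Matrix (Fin d) (Fin d) ℂ)
        (B : Fin m' → Matrix (Fin d) (Fin d) ℂ),
        IsPOVM A → IsPOVM B →
        (∃ p : Fin m' → Fin m → ℝ, (∀ i j, 0 ≤ p i j) ∧ (∀ j, ∑ i, p i j = 1) ∧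
          (∀ i, B i = ∑ j, ((p i j : ℂ) • A j))) →
        f m' B ≤ f m A) :
    (∀ (m : ℕ) (A : Fin m → Matrix (Fin d) (Fin d) ℂ), IsPOVM A →
      ∃ (m' : ℕ) (A' : Fin m' → Matrix (Fin d) (Fin d) ℂ),
        IsPOVM A' ∧ (∀ k, (A' k).rank ≤ 1) ∧ f m A ≤ f m' A')
    ∧ sSup {x : ℝ | ∃ (m : ℕ) (A : Fin m → Matrix (Fin d) (Fin d) ℂ),
          IsPOVM A ∧ f m A = x}
        = sSup {x : ℝ | ∃ (m : ℕ) (A : Fin m → Matrix (Fin d) (Fin d) ℂ),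
          IsPOVM A ∧ (∀ k, (A k).rank ≤ 1) ∧ f m A = x} :=
  monotone_attains_on_rank_one_general f fun m m' A g hA =>
    hmono m m' A _ hA (hA.coarseGrain g) (isPostProcessing_coarseGrain g A)
end

section
/- Fix density matrices ρ_1,…,ρ_n on ℂ^d with priors q_1,…,q_n > 0 summing to 1 and write ρ̄ = Σ_ν q_ν ρ_ν. Define the conditional entropy of the message given a POVM ε = (E_1,…,E_m) by H(N|ε) = −Σ_{y=1}^m Σ_{ν=1}^n q_ν tr(E_y ρ_ν) · log( q_ν tr(E_y ρ_ν) / tr(E_y ρ̄) ), with the convention that terms with q_ν tr(E_y ρ_ν) = 0 are zero. Then the negative conditional entropy is a resource monotone: if β = (B_1,…,B_{m′}) is a post-processing of α = (A_1,…,A_m), then H(N|α) ≤ H(N|β). Equivalently, the mutual information I(N:ε) = H(N) − H(N|ε), where H(N) = −Σ_ν q_ν log q_ν, satisfies I(N:β) ≤ I(N:α). -/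
open Matrix
open scoped ComplexOrder

/-- The conditional entropy `H(N|ε)` of the message given the measurement outcome.
Terms with vanishing joint probability `q_ν tr(E_y ρ_ν) = 0` vanish automatically
(`Real.log 0 = 0` and the factor is `0`). -/
noncomputable def condEnt {d n m : ℕ} (q : Fin n → ℝ)
    (ρ : Fin n → Matrix (Fin d) (Fin d) ℂ)
    (E : Fin m → Matrix (Fin d) (Fin d) ℂ) : ℝ :=
  -∑ y, ∑ ν, q ν * tprob (ρ ν) (E y) *
      Real.log (q ν * tprob (ρ ν) (E y) / tprob (∑ μ, ((q μ : ℂ) • ρ μ)) (E y))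

/-!
Up to sign, `H(N|ε)` is a sum over the messages `ν` of relative entropies `∑ a log (a / b)`, where
`a` and `b` are the vectors of outcome probabilities of `q_ν ρ_ν` and of `ρ̄`. Post-processing acts
on both vectors by the same column-stochastic matrix, and by the log-sum inequality, which is
Jensen's inequality for `x log x`, this cannot increase the relative entropy.
-/

/-- The relative entropy `D(a‖b)` of two nonnegative vectors, which need not be normalized. An index
with `b j = 0` contributes `0` whatever `a j` is, so the definition is meaningful only if `a`
vanishes wherever `b` does. -/
noncomputable def relEntropy {κ : Type*} [Fintype κ] (a b : κ → ℝ) : ℝ :=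
  ∑ j, a j * Real.log (a j / b j)

section RelEntropy

variable {ι κ : Type*}

theorem log_sum_inequality (s : Finset κ) {a b : κ → ℝ} (ha : ∀ j ∈ s, 0 ≤ a j)
    (hb : ∀ j ∈ s, 0 ≤ b j) (hab : ∀ j ∈ s, b j = 0 → a j = 0) :
    (∑ j ∈ s, a j) * Real.log ((∑ j ∈ s, a j) / ∑ j ∈ s, b j) ≤
      ∑ j ∈ s, a j * Real.log (a j / b j) := by
  rcases (Finset.sum_nonneg hb).eq_or_lt' with hb_sum | hb_sum
  · have a_eq_zero : ∀ j ∈ s, a j = 0 := fun j hj ↦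
      hab j hj ((Finset.sum_eq_zero_iff_of_nonneg hb).1 hb_sum j hj)
    rw [Finset.sum_eq_zero a_eq_zero, zero_mul,
      Finset.sum_eq_zero fun j hj ↦ mul_eq_zero_of_left (a_eq_zero j hj) _]
  · have mul_ratio : ∀ j ∈ s, b j * (a j / b j) = a j := fun j hj ↦
      mul_div_cancel_of_imp' (hab j hj)
    have mul_ratio_mul_log : ∀ j ∈ s, b j * (a j / b j * Real.log (a j / b j)) =
        a j * Real.log (a j / b j) := fun j hj ↦ by rw [← mul_assoc, mul_ratio j hj]
    have jensen : (∑ j ∈ s, a j) / (∑ j ∈ s, b j) * Real.log ((∑ j ∈ s, a j) / ∑ j ∈ s, b j) ≤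
        (∑ j ∈ s, a j * Real.log (a j / b j)) / ∑ j ∈ s, b j := by
      simpa only [Finset.centerMass, smul_eq_mul, Function.comp_apply, inv_mul_eq_div,
        Finset.sum_congr rfl mul_ratio, Finset.sum_congr rfl mul_ratio_mul_log] using
        Real.convexOn_mul_log.map_centerMass_le hb hb_sum
          fun j hj ↦ Set.mem_Ici.2 (div_nonneg (ha j hj) (hb j hj))
    rwa [div_mul_eq_mul_div, div_le_div_iff_of_pos_right hb_sum] at jensen

theorem dotProduct_mul_log_div_le [Fintype κ] {w a b : κ → ℝ} (hw : ∀ j, 0 ≤ w j)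
    (ha : ∀ j, 0 ≤ a j) (hb : ∀ j, 0 ≤ b j) (hab : ∀ j, b j = 0 → a j = 0) :
    w ⬝ᵥ a * Real.log (w ⬝ᵥ a / w ⬝ᵥ b) ≤ ∑ j, w j * (a j * Real.log (a j / b j)) := by
  calc w ⬝ᵥ a * Real.log (w ⬝ᵥ a / w ⬝ᵥ b)
      ≤ ∑ j, w j * a j * Real.log (w j * a j / (w j * b j)) :=
        log_sum_inequality Finset.univ (fun j _ ↦ mul_nonneg (hw j) (ha j))
          (fun j _ ↦ mul_nonneg (hw j) (hb j))
          fun j _ h ↦ mul_eq_zero.2 ((mul_eq_zero.1 h).imp_right (hab j))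
    _ = ∑ j, w j * (a j * Real.log (a j / b j)) := by
        refine Finset.sum_congr rfl fun j _ ↦ ?_
        rcases eq_or_ne (w j) 0 with hwj | hwj
        · simp [hwj]
        · rw [mul_div_mul_left _ _ hwj, mul_assoc]

theorem relEntropy_mulVec_le [Fintype ι] [Fintype κ] {W : Matrix ι κ ℝ} (hW : ∀ i j, 0 ≤ W i j)
    (hW_col : ∀ j, ∑ i, W i j = 1) {a b : κ → ℝ} (ha : ∀ j, 0 ≤ a j) (hb : ∀ j, 0 ≤ b j)
    (hab : ∀ j, b j = 0 → a j = 0) :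
    relEntropy (W *ᵥ a) (W *ᵥ b) ≤ relEntropy a b := by
  calc relEntropy (W *ᵥ a) (W *ᵥ b)
      ≤ ∑ i, ∑ j, W i j * (a j * Real.log (a j / b j)) :=
        Finset.sum_le_sum fun i _ ↦ dotProduct_mul_log_div_le (hW i) ha hb hab
    _ = ∑ j, (∑ i, W i j) * (a j * Real.log (a j / b j)) := by
        rw [Finset.sum_comm]
        simp only [Finset.sum_mul]
    _ = relEntropy a b := by simp only [hW_col, one_mul, relEntropy]

end RelEntropy

theorem trace_mul_nonneg_of_posSemidef_s11 {l 𝕜 : Type*} [Fintype l] [RCLike 𝕜] {A B : Matrix l l 𝕜}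
    (hA : A.PosSemidef) (hB : B.PosSemidef) : 0 ≤ (A * B).trace := by
  obtain ⟨_, v, rfl⟩ := posSemidef_iff_eq_sum_vecMulVec.1 hA
  rw [Finset.sum_mul, trace_sum]
  refine Finset.sum_nonneg fun i _ ↦ ?_
  rw [trace_mul_comm, mul_vecMulVec, trace_vecMulVec, dotProduct_comm]
  exact hB.dotProduct_mulVec_nonneg (v i)

/-- The vector of outcome probabilities `tr(E_y σ)` when `σ` is measured by the effects `E_y`, which
need not sum to the identity. -/
noncomputable def outcomeProb {d m : ℕ} (σ : Matrix (Fin d) (Fin d) ℂ)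
    (E : Fin m → Matrix (Fin d) (Fin d) ℂ) : Fin m → ℝ :=
  fun y ↦ tprob σ (E y)

section OutcomeProb

variable {d n m : ℕ}

theorem tprob_nonneg {ρ A : Matrix (Fin d) (Fin d) ℂ} (hρ : ρ.PosSemidef) (hA : A.PosSemidef) :
    0 ≤ tprob ρ A :=
  (Complex.nonneg_iff.1 (trace_mul_nonneg_of_posSemidef_s11 hA hρ)).1

theorem tprob_smul_left (c : ℝ) (ρ A : Matrix (Fin d) (Fin d) ℂ) :
    tprob ((c : ℂ) • ρ) A = c * tprob ρ A := by
  simp [tprob]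

theorem tprob_sum_left {ι : Type*} (s : Finset ι) (ρ : ι → Matrix (Fin d) (Fin d) ℂ)
    (A : Matrix (Fin d) (Fin d) ℂ) : tprob (∑ i ∈ s, ρ i) A = ∑ i ∈ s, tprob (ρ i) A := by
  simp [tprob, Finset.mul_sum, trace_sum]

theorem tprob_eq_zero_of_tprob_sum_eq_zero {ι : Type*} {s : Finset ι}
    {ρ : ι → Matrix (Fin d) (Fin d) ℂ} {A : Matrix (Fin d) (Fin d) ℂ}
    (hρ : ∀ i ∈ s, (ρ i).PosSemidef) (hA : A.PosSemidef) (h : tprob (∑ i ∈ s, ρ i) A = 0)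
    {i : ι} (hi : i ∈ s) : tprob (ρ i) A = 0 := by
  rw [tprob_sum_left] at h
  exact (Finset.sum_eq_zero_iff_of_nonneg fun i hi ↦ tprob_nonneg (hρ i hi) hA).1 h i hi

theorem outcomeProb_postprocess {m' : ℕ} (W : Matrix (Fin m') (Fin m) ℝ)
    (σ : Matrix (Fin d) (Fin d) ℂ) (E : Fin m → Matrix (Fin d) (Fin d) ℂ) :
    outcomeProb σ (fun i ↦ ∑ j, (W i j : ℂ) • E j) = W *ᵥ outcomeProb σ E := by
  ext i
  simp [outcomeProb, tprob, mulVec, dotProduct, Finset.sum_mul, trace_sum]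

theorem condEnt_eq_neg_sum_relEntropy (q : Fin n → ℝ) (ρ : Fin n → Matrix (Fin d) (Fin d) ℂ)
    (E : Fin m → Matrix (Fin d) (Fin d) ℂ) :
    condEnt q ρ E = -∑ ν, relEntropy (outcomeProb ((q ν : ℂ) • ρ ν) E)
      (outcomeProb (∑ μ, (q μ : ℂ) • ρ μ) E) := by
  simp only [condEnt, relEntropy, outcomeProb, tprob_smul_left]
  rw [Finset.sum_comm]

end OutcomeProb

theorem neg_cond_entropy_monotone_general {d n m m' : ℕ}
    {ρ : Fin n → Matrix (Fin d) (Fin d) ℂ} (hρ : ∀ ν, (ρ ν).PosSemidef)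
    {q : Fin n → ℝ} (hq : ∀ ν, 0 ≤ q ν)
    {A : Fin m → Matrix (Fin d) (Fin d) ℂ} (hA : ∀ j, (A j).PosSemidef)
    {p : Matrix (Fin m') (Fin m) ℝ} (hp0 : ∀ i j, 0 ≤ p i j) (hp1 : ∀ j, ∑ i, p i j = 1) :
    condEnt q ρ A ≤ condEnt q ρ (fun i ↦ ∑ j, (p i j : ℂ) • A j) := by
  have weighted_posSemidef : ∀ ν, ((q ν : ℂ) • ρ ν).PosSemidef := fun ν ↦
    (hρ ν).smul (Complex.zero_le_real.2 (hq ν))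
  have average_posSemidef : (∑ ν, (q ν : ℂ) • ρ ν).PosSemidef :=
    posSemidef_sum _ fun ν _ ↦ weighted_posSemidef ν
  simp only [condEnt_eq_neg_sum_relEntropy, outcomeProb_postprocess]
  refine neg_le_neg (Finset.sum_le_sum fun ν _ ↦ relEntropy_mulVec_le hp0 hp1 ?_ ?_ ?_)
  · exact fun j ↦ tprob_nonneg (weighted_posSemidef ν) (hA j)
  · exact fun j ↦ tprob_nonneg average_posSemidef (hA j)
  · exact fun j h ↦ tprob_eq_zero_of_tprob_sum_eq_zero (fun μ _ ↦ weighted_posSemidef μ) (hA j) h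
      (Finset.mem_univ ν)

/-- The negative conditional entropy `−H(N|ε)` is a resource monotone: under
post-processing `H(N|α) ≤ H(N|β)`; equivalently the mutual information
`I(N:ε) = H(N) − H(N|ε)` satisfies `I(N:β) ≤ I(N:α)`. -/
theorem neg_cond_entropy_monotone {d n : ℕ}
    (ρ : Fin n → Matrix (Fin d) (Fin d) ℂ)
    (hρ : ∀ ν, (ρ ν).PosSemidef ∧ (ρ ν).trace = 1)
    (q : Fin n → ℝ) (hq : ∀ ν, 0 < q ν) (hqs : ∑ ν, q ν = 1)
    {m m' : ℕ}
    (A : Fin m → Matrix (Fin d) (Fin d) ℂ) (hA : IsPOVM A)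
    (B : Fin m' → Matrix (Fin d) (Fin d) ℂ) (hB : IsPOVM B)
    (p : Fin m' → Fin m → ℝ) (hp0 : ∀ i j, 0 ≤ p i j)
    (hp1 : ∀ j, ∑ i, p i j = 1)
    (hpost : ∀ i, B i = ∑ j, ((p i j : ℂ) • A j)) :
    condEnt q ρ A ≤ condEnt q ρ B
    ∧ (-∑ ν, q ν * Real.log (q ν)) - condEnt q ρ B
        ≤ (-∑ ν, q ν * Real.log (q ν)) - condEnt q ρ A := by
  obtain rfl : B = fun i ↦ ∑ j, (p i j : ℂ) • A j := funext hpost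
  have condEnt_le := neg_cond_entropy_monotone_general (fun ν ↦ (hρ ν).1) (fun ν ↦ (hq ν).le) hA.1
    hp0 hp1
  exact ⟨condEnt_le, sub_le_sub_left condEnt_le _⟩
end
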